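/- Convolution identity for cyclotomic S-sums: let k, l ≥ 1, let a_1,…,a_k, c_1,…,c_k, d_1,…,d_l, f_1,…,f_l be positive integers, b_1,…,b_k, e_1,…,e_l nonnegative integers, x_1,…,x_k, y_1,…,y_l nonzero reals, and n ∈ ℕ. Then Σ_{i=1}^n S_{(a_1,b_1,c_1),…,(a_k,b_k,c_k)}(x_1,…,x_k; n−i) · S_{(d_2,e_2,f_2),…,(d_l,e_l,f_l)}(y_2,…,y_l; i) · y_1^i/(d_1 i + e_1)^{f_1} = Σ_{κ=1}^{f_1} binom(c_1+f_1−κ−1, c_1−1) · a_1^{f_1−κ} d_1^{c_1} · Σ_{i=1}^n ( x_1^i/(d_1 b_1 + a_1 e_1 + i·a_1 d_1)^{c_1+f_1−κ} · Σ_{j=1}^{i−1} S_{(a_2,b_2,c_2),…,(a_k,b_k,c_k)}(x_2,…,x_k; i−j) · S_{(d_2,e_2,f_2),…,(d_l,e_l,f_l)}(y_2,…,y_l; j) · (y_1/x_1)^j/(d_1 j + e_1)^{κ} ) + Σ_{κ=1}^{c_1} binom(c_1+f_1−κ−1, f_1−1) · a_1^{f_1} d_1^{c_1−κ} · Σ_{i=1}^n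 ( y_1^i/(d_1 b_1 + a_1 e_1 + i·a_1 d_1)^{c_1+f_1−κ} · Σ_{j=1}^{i−1} S_{(d_2,e_2,f_2),…,(d_l,e_l,f_l)}(y_2,…,y_l; i−j) · S_{(a_2,b_2,c_2),…,(a_k,b_k,c_k)}(x_2,…,x_k; j) · (x_1/y_1)^j/(a_1 j + b_1)^{κ} ). -/

import Mathlib

/-- Cyclotomic S-sums: `cycS [((a₁,b₁,c₁),x₁),…] n` is
`S_{(a₁,b₁,c₁),…}(x₁,…; n)`. The empty sum equals `1`. -/
noncomputable def cycS : List ((ℕ × ℤ × ℕ) × ℝ) → ℕ → ℝ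
  | [], _ => 1
  | ((a, b, c), x) :: t, n =>
      ∑ i ∈ Finset.Icc 1 n, x ^ i / ((a : ℝ) * i + (b : ℝ)) ^ c * cycS t i

/-!
The weights `x ^ i / (a i + b) ^ c` and `y ^ j / (d j + e) ^ f` are multiplied pair by pair. Their
denominators `A = a i + b` and `D = d j + e` combine to `d A + a D = d b + a e + (i + j) a d`, which
depends only on `i + j`. With `N = d A + a D`, `s = d A / N` and `t = a D / N` one has `s + t = 1`,
and dividing the Chaundy–Bullard identity
`s ^ c ∑_{r < f} binom(c - 1 + r, c - 1) t ^ r + t ^ f ∑_{r < c} binom(f - 1 + r, f - 1) s ^ r = 1`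
by `A ^ c D ^ f` expands `1 / (A ^ c D ^ f)` into terms `1 / (N ^ _ D ^ κ)` and `1 / (N ^ _ A ^ κ)`.
Summing over the pairs with `i + j = m` and then over `m` gives the convolution identity. The inner
S-sums are carried along as arbitrary sequences `u` and `v`.
-/

open Finset

theorem one_sub_mul_sum_choose_mul_pow {R : Type*} [CommRing R] (t : R) (p q : ℕ) :
    (1 - t) * ∑ r ∈ range q, ((p + 1 + r).choose (p + 1) : R) * t ^ r =
      ∑ r ∈ range q, ((p + r).choose p : R) * t ^ r - ((p + q).choose (p + 1) : R) * t ^ q := by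
  induction q with
  | zero => simp
  | succ q ih =>
    have pascal : ((p + 1 + q).choose (p + 1) : R) =
        (p + q).choose p + (p + q).choose (p + 1) := by
      rw [add_right_comm, Nat.choose_succ_succ, Nat.cast_add]
    rw [sum_range_succ, sum_range_succ, mul_add, ih, ← add_assoc, add_right_comm p q 1, pascal]
    ring

theorem chaundy_bullard_identity {R : Type*} [CommRing R] {s t : R} (hst : s + t = 1) (p q : ℕ) :
    s ^ (p + 1) * ∑ r ∈ range (q + 1), ((p + r).choose p : R) * t ^ r +
      t ^ (q + 1) * ∑ r ∈ range (p + 1), ((q + r).choose q : R) * s ^ r = 1 := by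
  obtain rfl : s = 1 - t := eq_sub_of_add_eq hst
  induction p with
  | zero => simp [mul_neg_geom_sum]
  | succ p ih =>
    -- From `p` to `p + 1` the first summand loses, and the second gains,
    -- `binom(p + q + 1, q) * s ^ (p + 1) * t ^ (q + 1)`.
    have symm : ((p + (q + 1)).choose (p + 1) : R) = (q + (p + 1)).choose q := by
      rw [add_left_comm, Nat.choose_symm_add]
    have recursion := one_sub_mul_sum_choose_mul_pow t p (q + 1)
    rw [pow_succ, mul_assoc, recursion, sum_range_succ _ (p + 1), symm]
    linear_combination ih

theorem sum_Icc_one_eq_sum_range_sub {M : Type*} [AddCommMonoid M] (g : ℕ → M) (m : ℕ) :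
    ∑ κ ∈ Icc 1 m, g κ = ∑ r ∈ range m, g (m - r) := by
  rw [range_eq_Ico, sum_Ico_reflect g 0 m.le_succ, Nat.add_sub_cancel_left, Nat.sub_zero,
    Ico_add_one_right_eq_Icc]

theorem sum_Icc_one_sub_one_reflect {M : Type*} [AddCommMonoid M] (g : ℕ → M) (m : ℕ) :
    ∑ j ∈ Icc 1 (m - 1), g (m - j) = ∑ j ∈ Icc 1 (m - 1), g j := by
  have Icc_eq_Ico : Icc 1 (m - 1) = Ico 1 m := by grind
  rw [Icc_eq_Ico, sum_Ico_reflect g 1 m.le_succ, Nat.add_sub_cancel_left, Nat.add_sub_cancel]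

theorem sum_Icc_one_sum_Icc_one_sub {M : Type*} [AddCommMonoid M] (g : ℕ → ℕ → M) (n : ℕ) :
    ∑ i ∈ Icc 1 n, ∑ j ∈ Icc 1 (n - i), g i j =
      ∑ m ∈ Icc 1 n, ∑ j ∈ Icc 1 (m - 1), g j (m - j) := by
  rw [sum_sigma', sum_sigma']
  refine sum_nbij' (fun ⟨i, j⟩ ↦ ⟨i + j, i⟩) (fun ⟨m, i⟩ ↦ ⟨i, m - i⟩) ?_ ?_ ?_ ?_ ?_ <;> grind

theorem sum_sum_mul_eq_sum_mul_sum {ι₁ ι₂ R : Type*} [NonUnitalNonAssocSemiring R] (s : Finset ι₁)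
    (t : Finset ι₂) (r : ι₂ → R) (g : ι₁ → ι₂ → R) :
    ∑ i ∈ s, ∑ k ∈ t, r k * g i k = ∑ k ∈ t, r k * ∑ i ∈ s, g i k := by
  simp only [mul_sum]
  exact sum_comm

section PartialFractions

variable {K : Type*} [Field K] {A D N a d x y : K} {c f : ℕ}

theorem sum_choose_mul_pow_div_eq (hA : A ≠ 0) (hD : D ≠ 0) (hN : N ≠ 0) (p q : ℕ) :
    ∑ κ ∈ Icc 1 (q + 1), (p + 1 + (q + 1) - κ - 1).choose p * a ^ (q + 1 - κ) * d ^ (p + 1) /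
        (N ^ (p + 1 + (q + 1) - κ) * D ^ κ) =
      (d * A / N) ^ (p + 1) * (∑ r ∈ range (q + 1), (p + r).choose p * (a * D / N) ^ r) /
        (A ^ (p + 1) * D ^ (q + 1)) := by
  rw [sum_Icc_one_eq_sum_range_sub, mul_sum, sum_div]
  refine sum_congr rfl fun r hr ↦ ?_
  obtain ⟨m, rfl⟩ := Nat.exists_eq_add_of_le (mem_range_succ_iff.mp hr)
  rw [show p + 1 + (r + m + 1) - (r + m + 1 - r) = p + r + 1 by lia,
    show r + m + 1 - (r + m + 1 - r) = r by lia, show r + m + 1 - r = m + 1 by lia,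
    Nat.add_sub_cancel]
  simp only [div_pow, mul_pow, pow_add]
  field_simp

theorem one_div_pow_mul_pow_eq_sum (hA : A ≠ 0) (hD : D ≠ 0) (hN : N ≠ 0)
    (hADN : d * A + a * D = N) (hc : 0 < c) (hf : 0 < f) :
    1 / (A ^ c * D ^ f) =
      ∑ κ ∈ Icc 1 f, (c + f - κ - 1).choose (c - 1) * a ^ (f - κ) * d ^ c /
        (N ^ (c + f - κ) * D ^ κ) +
      ∑ κ ∈ Icc 1 c, (c + f - κ - 1).choose (f - 1) * a ^ f * d ^ (c - κ) /
        (N ^ (c + f - κ) * A ^ κ) := by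
  obtain ⟨p, rfl⟩ := Nat.exists_eq_add_one.mpr hc
  obtain ⟨q, rfl⟩ := Nat.exists_eq_add_one.mpr hf
  have hst : d * A / N + a * D / N = 1 := by rw [← add_div, hADN, div_self hN]
  have sum_D := sum_choose_mul_pow_div_eq (a := a) (d := d) hA hD hN p q
  have sum_A := sum_choose_mul_pow_div_eq (a := d) (d := a) hD hA hN q p
  simp only [add_comm (q + 1) (p + 1), mul_right_comm _ (d ^ _) (a ^ _), mul_comm (D ^ _)] at sum_A
  rw [Nat.add_sub_cancel, Nat.add_sub_cancel, sum_D, sum_A, ← add_div, chaundy_bullard_identity hst]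

theorem pow_div_pow_mul_pow_div_pow_eq_sum (hA : A ≠ 0) (hD : D ≠ 0) (hN : N ≠ 0)
    (hADN : d * A + a * D = N) (hx : x ≠ 0) (hy : y ≠ 0) (hc : 0 < c) (hf : 0 < f) (i j : ℕ) :
    x ^ i / A ^ c * (y ^ j / D ^ f) =
      ∑ κ ∈ Icc 1 f, (c + f - κ - 1).choose (c - 1) * a ^ (f - κ) * d ^ c *
        (x ^ (i + j) / N ^ (c + f - κ) * ((y / x) ^ j / D ^ κ)) +
      ∑ κ ∈ Icc 1 c, (c + f - κ - 1).choose (f - 1) * a ^ f * d ^ (c - κ) *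
        (y ^ (i + j) / N ^ (c + f - κ) * ((x / y) ^ i / A ^ κ)) := by
  have weight_x : x ^ (i + j) * (y / x) ^ j = x ^ i * y ^ j := by
    rw [pow_add, mul_assoc, ← mul_pow, mul_div_cancel₀ _ hx]
  have weight_y : y ^ (i + j) * (x / y) ^ i = x ^ i * y ^ j := by
    rw [pow_add, mul_right_comm, ← mul_pow, mul_div_cancel₀ _ hy]
  simp only [div_mul_div_comm, weight_x, weight_y]
  rw [div_eq_mul_one_div, one_div_pow_mul_pow_eq_sum hA hD hN hADN hc hf, mul_add, mul_sum, mul_sum]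
  simp only [mul_div_left_comm]

end PartialFractions

section Convolution

variable {K : Type*} [Field K] {a b d e x y : K} {c f : ℕ} (u v : ℕ → K)

theorem sum_Icc_one_sub_one_pow_div_mul_pow_div_eq (hab : ∀ i : ℕ, 0 < i → a * i + b ≠ 0)
    (hde : ∀ i : ℕ, 0 < i → d * i + e ≠ 0) (hN : ∀ i : ℕ, 1 < i → d * b + a * e + i * a * d ≠ 0)
    (hx : x ≠ 0) (hy : y ≠ 0) (hc : 0 < c) (hf : 0 < f) (m : ℕ) :
    ∑ j ∈ Icc 1 (m - 1), x ^ (m - j) / (a * ↑(m - j) + b) ^ c * u (m - j) * v j *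
        (y ^ j / (d * j + e) ^ f) =
      ∑ κ ∈ Icc 1 f, (c + f - κ - 1).choose (c - 1) * a ^ (f - κ) * d ^ c *
        (x ^ m / (d * b + a * e + m * a * d) ^ (c + f - κ) *
          ∑ j ∈ Icc 1 (m - 1), u (m - j) * v j * ((y / x) ^ j / (d * j + e) ^ κ)) +
      ∑ κ ∈ Icc 1 c, (c + f - κ - 1).choose (f - 1) * a ^ f * d ^ (c - κ) *
        (y ^ m / (d * b + a * e + m * a * d) ^ (c + f - κ) *
          ∑ j ∈ Icc 1 (m - 1), v (m - j) * u j * ((x / y) ^ j / (a * j + b) ^ κ)) := by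
  have reflect (κ : ℕ) :
      ∑ j ∈ Icc 1 (m - 1), v (m - j) * u j * ((x / y) ^ j / (a * j + b) ^ κ) =
        ∑ j ∈ Icc 1 (m - 1),
          v j * u (m - j) * ((x / y) ^ (m - j) / (a * ↑(m - j) + b) ^ κ) := by
    rw [← sum_Icc_one_sub_one_reflect]
    refine sum_congr rfl fun j hj ↦ ?_
    rw [Nat.sub_sub_self (by grind)]
  simp only [reflect, mul_sum]
  rw [sum_comm (s := Icc 1 f), sum_comm (s := Icc 1 c), ← sum_add_distrib]
  refine sum_congr rfl fun j hj ↦ ?_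
  obtain ⟨hj1, hjm⟩ := mem_Icc.mp hj
  obtain ⟨i, rfl⟩ : ∃ i, m = i + j := ⟨m - j, by lia⟩
  have denominators_add : d * (a * i + b) + a * (d * j + e) =
      d * b + a * e + ↑(i + j) * a * d := by
    push_cast
    ring
  have partial_fractions := pow_div_pow_mul_pow_div_pow_eq_sum (hab i (by lia)) (hde j hj1)
    (hN (i + j) (by lia)) denominators_add hx hy hc hf i j
  rw [Nat.add_sub_cancel, mul_assoc _ (u i), mul_right_comm, partial_fractions, add_mul, sum_mul,
    sum_mul]
  congr! 2 <;> ring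

theorem cycS_convolution_general (hab : ∀ i : ℕ, 0 < i → a * i + b ≠ 0)
    (hde : ∀ i : ℕ, 0 < i → d * i + e ≠ 0) (hN : ∀ i : ℕ, 1 < i → d * b + a * e + i * a * d ≠ 0)
    (hx : x ≠ 0) (hy : y ≠ 0) (hc : 0 < c) (hf : 0 < f) (n : ℕ) :
    ∑ i ∈ Icc 1 n, (∑ j ∈ Icc 1 (n - i), x ^ j / (a * j + b) ^ c * u j) * v i *
        (y ^ i / (d * i + e) ^ f) =
      ∑ κ ∈ Icc 1 f, (c + f - κ - 1).choose (c - 1) * a ^ (f - κ) * d ^ c *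
        ∑ i ∈ Icc 1 n, x ^ i / (d * b + a * e + i * a * d) ^ (c + f - κ) *
          ∑ j ∈ Icc 1 (i - 1), u (i - j) * v j * ((y / x) ^ j / (d * j + e) ^ κ) +
      ∑ κ ∈ Icc 1 c, (c + f - κ - 1).choose (f - 1) * a ^ f * d ^ (c - κ) *
        ∑ i ∈ Icc 1 n, y ^ i / (d * b + a * e + i * a * d) ^ (c + f - κ) *
          ∑ j ∈ Icc 1 (i - 1), v (i - j) * u j * ((x / y) ^ j / (a * j + b) ^ κ) := by
  simp only [sum_mul (Icc 1 (n - _)), sum_Icc_one_sum_Icc_one_sub]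
  rw [sum_congr rfl fun m _ ↦
    sum_Icc_one_sub_one_pow_div_mul_pow_div_eq u v hab hde hN hx hy hc hf m,
    sum_add_distrib, sum_sum_mul_eq_sum_mul_sum, sum_sum_mul_eq_sum_mul_sum]

end Convolution

/-- Convolution identity for cyclotomic S-sums. -/
theorem cycS_convolution
    (a₁ c₁ d₁ f₁ b₁ e₁ : ℕ) (x₁ y₁ : ℝ)
    (t₁ t₂ : List ((ℕ × ℤ × ℕ) × ℝ)) (n : ℕ)
    (ha₁ : 0 < a₁) (hc₁ : 0 < c₁) (hd₁ : 0 < d₁) (hf₁ : 0 < f₁)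
    (hx₁ : x₁ ≠ 0) (hy₁ : y₁ ≠ 0)
    (ht₁ : ∀ p ∈ t₁, 0 < p.1.1 ∧ 0 ≤ p.1.2.1 ∧ 0 < p.1.2.2 ∧ p.2 ≠ 0)
    (ht₂ : ∀ p ∈ t₂, 0 < p.1.1 ∧ 0 ≤ p.1.2.1 ∧ 0 < p.1.2.2 ∧ p.2 ≠ 0) :
    ∑ i ∈ Finset.Icc 1 n,
        cycS (((a₁, (b₁ : ℤ), c₁), x₁) :: t₁) (n - i) * cycS t₂ i *
          (y₁ ^ i / ((d₁ : ℝ) * i + (e₁ : ℝ)) ^ f₁) =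
      (∑ κ ∈ Finset.Icc 1 f₁, (Nat.choose (c₁ + f₁ - κ - 1) (c₁ - 1) : ℝ) *
          (a₁ : ℝ) ^ (f₁ - κ) * (d₁ : ℝ) ^ c₁ *
          ∑ i ∈ Finset.Icc 1 n,
            x₁ ^ i / ((d₁ : ℝ) * (b₁ : ℝ) + (a₁ : ℝ) * (e₁ : ℝ) +
                (i : ℝ) * (a₁ : ℝ) * (d₁ : ℝ)) ^ (c₁ + f₁ - κ) *
              ∑ j ∈ Finset.Icc 1 (i - 1),
                cycS t₁ (i - j) * cycS t₂ j *
                  ((y₁ / x₁) ^ j / ((d₁ : ℝ) * j + (e₁ : ℝ)) ^ κ))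
      + ∑ κ ∈ Finset.Icc 1 c₁, (Nat.choose (c₁ + f₁ - κ - 1) (f₁ - 1) : ℝ) *
          (a₁ : ℝ) ^ f₁ * (d₁ : ℝ) ^ (c₁ - κ) *
          ∑ i ∈ Finset.Icc 1 n,
            y₁ ^ i / ((d₁ : ℝ) * (b₁ : ℝ) + (a₁ : ℝ) * (e₁ : ℝ) +
                (i : ℝ) * (a₁ : ℝ) * (d₁ : ℝ)) ^ (c₁ + f₁ - κ) *
              ∑ j ∈ Finset.Icc 1 (i - 1),
                cycS t₂ (i - j) * cycS t₁ j *
                  ((x₁ / y₁) ^ j / ((a₁ : ℝ) * j + (b₁ : ℝ)) ^ κ) := by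
  simpa only [cycS, Int.cast_natCast] using cycS_convolution_general (cycS t₁) (cycS t₂)
    (by intros; positivity) (by intros; positivity) (by intros; positivity) hx₁ hy₁ hc₁ hf₁ n
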